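/- arXiv:1509.02019 — 2 statements merged into one kernel-verified Lean document; each statement's English description precedes it below -/
import Mathlib

section
/- Let 𝐅 = (F_1,…,F_d) be a d-tuple of continuous cdfs on ℝ with F_{i-1} ≥ F_i pointwise for all 2 ≤ i ≤ d, let C ∈ C^OS(𝐅), and let U be a random vector with cdf S_𝐅(C). Then the multidiagonal δ^𝐅 = (δ_(1),…,δ_(d)) of S_𝐅(C) (i.e. the one-dimensional marginal cdfs of the order statistics U^OS of U) does not depend on C and satisfies δ_{(i)} = F_i ∘ G^{-1} and δ_{(i)}^{-1} = G ∘ F_i^{-1} for 1 ≤ i ≤ d, where G = (1/d) Σ_{i=1}^d F_i. Furthermore, C is the unique copula of U^OS. -/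
/-!
Let `X ∼ μ` be an order statistic with continuous marginal cdfs `F` and copula `C`, and let `G` be
the average of the `F i`. By Sklar's theorem `joinCopula F C = μ`, and every marginal of `X_Π` has
cdf `G`, so `S_F(C)` is the law of `(G(X_Π(1)), …, G(X_Π(d)))`. As `X` is almost surely
nondecreasing and `G` is nondecreasing, sorting undoes the permutation: `U^OS` has the law of
`(G(X_1), …, G(X_d))` (`map_orderStat_SF`). In particular `δ_(i)` is the law `mdiagF F i` of
`G(X_i)`, which depends on `F` only.

The increments of `G` dominate those of `F_i / d`, so every level set of `G` is `F_i`-null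
(`Gbar_level_null`). This gives `δ_(i) = F_i ∘ G⁻¹` (`cdf1_mdiagF`), the continuity of `δ_(i)`,
and `δ_(i) ∘ G = F_i` (`cdf1_mdiagF_Gbar`). The last identity and the continuity of `G` yield
`δ_(i)⁻¹ = G ∘ F_i⁻¹` (`qInvE_mdiagF`); it also shows that `U^OS` and `X` have the same copula,
which is the only one because the `δ_(i)` are continuous (`eq_copulaOf_of_isCopulaOf`).
-/

/- Formalization framework for "Maximum entropy distribution of order statistics with given
marginals" (Butucea, Delmas, Dutfoy, Fischer).  One-dimensional cdfs are identified with
(probability) measures on `ℝ`, and cdfs on `ℝ^d` with measures on `Fin d → ℝ`. -/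

open MeasureTheory Set
open scoped ENNReal

noncomputable section

namespace MaxEntOS

variable {d : ℕ}

/-- The cumulative distribution function of a measure on `ℝ`. -/
def cdf1 (ν : Measure ℝ) (t : ℝ) : ℝ := (ν (Iic t)).toReal

/-- The cdf extended to `EReal` arguments (so that `cdfE ν ⊥ = 0` and `cdfE ν ⊤ = ν ℝ`). -/
def cdfE (ν : Measure ℝ) (x : EReal) : ℝ := (ν {s : ℝ | (s : EReal) ≤ x}).toReal

/-- The generalized inverse (quantile function) of the cdf of `ν`, real-valued. -/
def qReal (ν : Measure ℝ) (t : ℝ) : ℝ := sInf {s : ℝ | t ≤ cdf1 ν s}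

/-- The generalized inverse of a nondecreasing function `g : ℝ → ℝ`, `EReal`-valued, with the
conventions `inf ∅ = ⊤` and `inf ℝ = ⊥`. -/
def qInvE (g : ℝ → ℝ) (t : ℝ) : EReal := sInf ((fun s : ℝ => (s : EReal)) '' {s : ℝ | t ≤ g s})

open scoped Classical in
/-- The differential entropy (with respect to Lebesgue measure) of a measure, with values in
`EReal` : it equals `⊥` if the measure is not absolutely continuous, and otherwise it is
`−∫ f log f`, computed as the difference of the lower integrals of the negative and positive
parts of `f log f`, where `f` is the density. -/
def dEntropy {α : Type*} [MeasureSpace α] (μ : Measure α) : EReal :=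
  if μ ≪ (volume : Measure α) then
    ((∫⁻ x, ENNReal.ofReal
        (-((μ.rnDeriv volume x).toReal * Real.log ((μ.rnDeriv volume x).toReal))) : ℝ≥0∞) : EReal)
      - ((∫⁻ x, ENNReal.ofReal
        ((μ.rnDeriv volume x).toReal * Real.log ((μ.rnDeriv volume x).toReal)) : ℝ≥0∞) : EReal)
  else ⊥

/-- The nondecreasing rearrangement (order statistics) of a tuple. -/
def orderStat (x : Fin d → ℝ) : Fin d → ℝ := fun i => x (Tuple.sort x i)

/-- The `i`-th one-dimensional marginal of a measure on `ℝ^d`. -/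
def marg (μ : Measure (Fin d → ℝ)) (i : Fin d) : Measure ℝ := μ.map fun x => x i

/-- The multidiagonal of a measure on `ℝ^d` : the tuple of one-dimensional marginals of the
order statistics. -/
def multidiag (μ : Measure (Fin d → ℝ)) (i : Fin d) : Measure ℝ := μ.map fun x => orderStat x i

/-- The uniform distribution on `[0,1]`. -/
def uniform01 : Measure ℝ := (volume : Measure ℝ).restrict (Icc 0 1)

/-- A copula : a probability measure on `ℝ^d` whose one-dimensional marginals are all uniform
on `[0,1]`. -/
def IsCopula (μ : Measure (Fin d → ℝ)) : Prop :=
  IsProbabilityMeasure μ ∧ ∀ i, marg μ i = uniform01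

/-- A measure on `ℝ^d` is symmetric (exchangeable) if it is invariant under permutations of the
coordinates. -/
def IsSymmetric (μ : Measure (Fin d → ℝ)) : Prop :=
  ∀ π : Equiv.Perm (Fin d), μ.map (fun x => fun i => x (π i)) = μ

/-- `δ` belongs to `D` : it is the multidiagonal of some copula. -/
def IsMultidiag (δ : Fin d → Measure ℝ) : Prop :=
  ∃ μ : Measure (Fin d → ℝ), IsCopula μ ∧ multidiag μ = δ

/-- `δ` belongs to `D^0` : it is the multidiagonal of some absolutely continuous copula. -/
def IsMultidiag0 (δ : Fin d → Measure ℝ) : Prop :=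
  ∃ μ : Measure (Fin d → ℝ), IsCopula μ ∧ μ ≪ (volume : Measure (Fin d → ℝ)) ∧ multidiag μ = δ

/-- `F ∈ F_d` : `F` is a `d`-tuple of continuous one-dimensional cdfs (identified with atomless
probability measures on `ℝ`) which are stochastically ordered : `F (i-1) ≥ F i` pointwise. -/
structure IsMargOS [NeZero d] (F : Fin d → Measure ℝ) : Prop where
  prob : ∀ i, IsProbabilityMeasure (F i)
  cont : ∀ i, ∀ t : ℝ, F i {t} = 0
  ord : ∀ i : Fin d, i ≠ 0 → ∀ t : ℝ, cdf1 (F i) t ≤ cdf1 (F (i - 1)) t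

/-- `μ ∈ L^OS_d(F)` : `μ` is the distribution of a `d`-dimensional order statistic (an almost
surely nondecreasing random vector) with one-dimensional marginals `F`. -/
def IsCdfOS (F : Fin d → Measure ℝ) (μ : Measure (Fin d → ℝ)) : Prop :=
  IsProbabilityMeasure μ ∧ μ {x | Monotone x} = 1 ∧ ∀ i, marg μ i = F i

/-- `F ∈ F_d^0` : there exists an absolutely continuous distribution of order statistics with
one-dimensional marginals `F`. -/
def IsMargOS0 [NeZero d] (F : Fin d → Measure ℝ) : Prop :=
  IsMargOS F ∧ ∃ μ : Measure (Fin d → ℝ), IsCdfOS F μ ∧ μ ≪ (volume : Measure (Fin d → ℝ))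

/-- The functional `J(F) = ∑_{i=2}^d ∫ |log (F_{i-1}(t) − F_i(t))| dF_i(t) ∈ [0,∞]`. -/
def Jfun [NeZero d] (F : Fin d → Measure ℝ) : ℝ≥0∞ :=
  ∑ i : Fin d, if i = 0 then 0 else
    ∫⁻ t, ENNReal.ofReal |Real.log (cdf1 (F (i - 1)) t - cdf1 (F i) t)| ∂(F i)

/-- The copula of a measure on `ℝ^d` (for continuous marginals this is the unique copula
provided by Sklar's theorem) : the law of `(F_1(X_1), …, F_d(X_d))`. -/
def copulaOf (μ : Measure (Fin d → ℝ)) : Measure (Fin d → ℝ) :=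
  μ.map fun x => fun i => cdf1 (marg μ i) (x i)

/-- The set `C^{OS}(F)` of copulas of distributions of order statistics with marginal
cdfs `F`. -/
def copulaOS (F : Fin d → Measure ℝ) : Set (Measure (Fin d → ℝ)) :=
  {C | ∃ μ, IsCdfOS F μ ∧ copulaOf μ = C}

/-- The joint distribution with one-dimensional marginals `F` and copula `C` : the law of
`(F_1^{-1}(U_1), …, F_d^{-1}(U_d))` where `U ∼ C`. -/
def joinCopula (F : Fin d → Measure ℝ) (C : Measure (Fin d → ℝ)) : Measure (Fin d → ℝ) :=
  C.map fun u => fun i => qReal (F i) (u i)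

/-- The law of `X_Π`, where `X ∼ μ` and `Π` is an independent uniform random permutation of
`{1, …, d}`. -/
def symmetrize (μ : Measure (Fin d → ℝ)) : Measure (Fin d → ℝ) :=
  (d.factorial : ℝ≥0∞)⁻¹ • ∑ π : Equiv.Perm (Fin d), μ.map (fun x => fun i => x (π i))

/-- The symmetrizing operator `S_F` on copulas : `S_F(C)` is the copula of `X_Π` where `X` has
one-dimensional marginals `F` and copula `C`, and `Π` is an independent uniform random
permutation. -/
def SF (F : Fin d → Measure ℝ) (C : Measure (Fin d → ℝ)) : Measure (Fin d → ℝ) :=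
  copulaOf (symmetrize (joinCopula F C))

/-- The average cdf `G = (1/d) ∑_{i=1}^d F_i`. -/
def Gbar (F : Fin d → Measure ℝ) (t : ℝ) : ℝ := (∑ i, cdf1 (F i) t) / d

/-- `G` extended to `EReal` arguments (`GbarE F ⊥ = 0` and `GbarE F ⊤ = 1` for probability
measures). -/
def GbarE (F : Fin d → Measure ℝ) (x : EReal) : ℝ := (∑ i, cdfE (F i) x) / d

/-- The multidiagonal `δ^F` associated to the marginals `F`, as a tuple of measures : the law
of `G(X_i)` where `X_i ∼ F_i`, whose cdf is `F_i ∘ G^{-1}`. -/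
def mdiagF (F : Fin d → Measure ℝ) (i : Fin d) : Measure ℝ := (F i).map (Gbar F)

/-- `C` is a copula of the measure `ν` on `ℝ^d` : `C` is a copula and `ν` is the joint
distribution with the marginals of `ν` and copula `C`. -/
def IsCopulaOf (C ν : Measure (Fin d → ℝ)) : Prop :=
  IsCopula C ∧ ν = joinCopula (marg ν) C

/-- The extended tuple of multidiagonal cdfs, with the conventions `δ_(0) = 1` and
`δ_(d+1) = 0`; the natural index `i ∈ {1, …, d}` corresponds to `δ_(i)`. -/
def dcdf (δ : Fin d → Measure ℝ) (i : ℕ) (t : ℝ) : ℝ :=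
  if h0 : i = 0 then 1
  else if h : i ≤ d then cdf1 (δ ⟨i - 1, by omega⟩) t
  else 0

/-- The open set `Ψ^δ_i = {t ∈ (0,1) : δ_(i-1)(t) > δ_(i)(t)}`, for `1 ≤ i ≤ d+1`
(with the conventions `δ_(0) = 1` and `δ_(d+1) = 0`). -/
def Psi (δ : Fin d → Measure ℝ) (i : ℕ) : Set ℝ :=
  Ioo 0 1 ∩ {t | dcdf δ i t < dcdf δ (i - 1) t}

/-- Left endpoint of the connected component of `U` containing `t`. -/
def lend (U : Set ℝ) (t : ℝ) : ℝ := sSup {s | s ≤ t ∧ s ∉ U}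

/-- Right endpoint of the connected component of `U` containing `t`. -/
def rend (U : Set ℝ) (t : ℝ) : ℝ := sInf {s | t ≤ s ∧ s ∉ U}

/-- Midpoint `m_i^{(j)}` of the connected component of `U` containing `t`. -/
def midpt (U : Set ℝ) (t : ℝ) : ℝ := (lend U t + rend U t) / 2

/-- The integrand `δ'_(i)(s) / (δ_(i-1)(s) − δ_(i)(s))` (that is, `K'_i`). -/
def kInt (δ : Fin d → Measure ℝ) (i : ℕ) (s : ℝ) : ℝ :=
  deriv (dcdf δ i) s / (dcdf δ (i - 1) s - dcdf δ i s)

/-- `K_i(t)`, integrating `K'_i` from the midpoint of the connected component of `Ψ^δ_i`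
containing `t` (note `K_{d+1} = 0` holds automatically, `δ_(d+1)` being constant). -/
def Kfun (δ : Fin d → Measure ℝ) (i : ℕ) (t : ℝ) : ℝ :=
  ∫ s in (midpt (Psi δ i) t)..t, kInt δ i s

/-- The function `a_i(t) = K'_i(t) e^{K_{i+1}(t) − K_i(t)} 1_{Ψ^δ_i ∩ Ψ^δ_{i+1}}(t)`. -/
def aFun (δ : Fin d → Measure ℝ) (i : ℕ) : ℝ → ℝ :=
  (Psi δ i ∩ Psi δ (i + 1)).indicator fun t =>
    kInt δ i t * Real.exp (Kfun δ (i + 1) t - Kfun δ i t)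

/-- The set `L_δ` of `u ∈ [0,1]^d` such that `(u_(i-1), u_(i)) ⊆ Ψ^δ_i` for all `2 ≤ i ≤ d`. -/
def Lset [NeZero d] (δ : Fin d → Measure ℝ) : Set (Fin d → ℝ) :=
  {u | (∀ j, u j ∈ Icc (0 : ℝ) 1) ∧
    ∀ i : Fin d, i ≠ 0 → Ioo (orderStat u (i - 1)) (orderStat u i) ⊆ Psi δ (i.val + 1)}

/-- The density `c_δ(u) = (1/d!) 1_{L_δ}(u) ∏_{i=1}^d a_i(u_(i))` of the maximum entropy copula
with multidiagonal `δ`. -/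
def cDelta [NeZero d] (δ : Fin d → Measure ℝ) : (Fin d → ℝ) → ℝ :=
  (Lset δ).indicator fun u =>
    (d.factorial : ℝ)⁻¹ * ∏ i : Fin d, aFun δ (i.val + 1) (orderStat u i)

/-- The maximum entropy copula `C_δ` with multidiagonal `δ` : the measure with density `c_δ`. -/
def CDelta [NeZero d] (δ : Fin d → Measure ℝ) : Measure (Fin d → ℝ) :=
  (volume : Measure (Fin d → ℝ)).withDensity fun u => ENNReal.ofReal (cDelta δ u)

/-- The density of a one-dimensional measure `ν` with respect to Lebesgue measure. -/
def densOf (ν : Measure ℝ) (t : ℝ) : ℝ := (ν.rnDeriv volume t).toReal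

/-- The function `ℓ_i(t) = f_i(t) / (F_{i-1}(t) − F_i(t))`. -/
def ellF [NeZero d] (F : Fin d → Measure ℝ) (i : Fin d) (t : ℝ) : ℝ :=
  densOf (F i) t / (cdf1 (F (i - 1)) t - cdf1 (F i) t)

/-- The set `L^F` of ordered vectors `x ∈ ℝ^d` such that `F_{i-1}(t) > F_i(t)` for all
`t ∈ (x_{i-1}, x_i)` and all `2 ≤ i ≤ d`. -/
def LsetF [NeZero d] (F : Fin d → Measure ℝ) : Set (Fin d → ℝ) :=
  {x | Monotone x ∧ ∀ i : Fin d, i ≠ 0 →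
    ∀ t ∈ Ioo (x (i - 1)) (x i), cdf1 (F i) t < cdf1 (F (i - 1)) t}

/-- The density `f_F` of the maximum entropy distribution of order statistics with marginal
cdfs `F` :
`f_F(x) = f_1(x_1) ∏_{i=2}^d ℓ_i(x_i) exp(−∫_{x_{i-1}}^{x_i} ℓ_i(s) ds) 1_{L^F}(x)`. -/
def fF [NeZero d] (F : Fin d → Measure ℝ) : (Fin d → ℝ) → ℝ :=
  (LsetF F).indicator fun x =>
    densOf (F 0) (x 0) *
      ∏ i ∈ Finset.univ.erase (0 : Fin d),
        ellF F i (x i) * Real.exp (-∫ s in (x (i - 1))..(x i), ellF F i s)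


/-! ### One-dimensional continuous cdfs and their quantile functions -/

section OneDim

variable (ν : Measure ℝ)

lemma cdf1_eq_cdf [IsProbabilityMeasure ν] (t : ℝ) : cdf1 ν t = ProbabilityTheory.cdf ν t := by
  rw [ProbabilityTheory.cdf_eq_real]; rfl

lemma cdf1_mono [IsProbabilityMeasure ν] : Monotone (cdf1 ν) := by
  intro a b h
  rw [cdf1_eq_cdf, cdf1_eq_cdf]
  exact ProbabilityTheory.monotone_cdf ν h

lemma cdf1_nonneg (t : ℝ) : 0 ≤ cdf1 ν t := ENNReal.toReal_nonneg

lemma cdf1_le_one [IsProbabilityMeasure ν] (t : ℝ) : cdf1 ν t ≤ 1 := by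
  rw [cdf1_eq_cdf]; exact ProbabilityTheory.cdf_le_one ν t

lemma tendsto_cdf1_atBot [IsProbabilityMeasure ν] :
    Filter.Tendsto (cdf1 ν) Filter.atBot (nhds 0) := by
  rw [funext (cdf1_eq_cdf ν)]; exact ProbabilityTheory.tendsto_cdf_atBot ν

lemma tendsto_cdf1_atTop [IsProbabilityMeasure ν] :
    Filter.Tendsto (cdf1 ν) Filter.atTop (nhds 1) := by
  rw [funext (cdf1_eq_cdf ν)]; exact ProbabilityTheory.tendsto_cdf_atTop ν

lemma continuous_cdf1 [IsProbabilityMeasure ν] (hν : ∀ t, ν {t} = 0) : Continuous (cdf1 ν) := by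
  rw [funext (cdf1_eq_cdf ν)]
  refine continuous_iff_continuousAt.2 fun x => ?_
  have h := (ProbabilityTheory.cdf ν).measure_singleton x
  rw [ProbabilityTheory.measure_cdf, hν x] at h
  have hmono := ProbabilityTheory.monotone_cdf ν
  have h1 : ProbabilityTheory.cdf ν x ≤ Function.leftLim (ProbabilityTheory.cdf ν) x := by
    have := ENNReal.ofReal_eq_zero.1 h.symm
    linarith
  rw [hmono.continuousAt_iff_leftLim_eq_rightLim, StieltjesFunction.rightLim_eq]
  exact le_antisymm (hmono.leftLim_le le_rfl) h1

/-- Intermediate values: a continuous cdf attains every level in `(0,1)`. -/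
lemma exists_cdf1_eq [IsProbabilityMeasure ν] (hν : ∀ t, ν {t} = 0) {t : ℝ}
    (ht : t ∈ Ioo (0 : ℝ) 1) : ∃ x, cdf1 ν x = t := by
  obtain ⟨a, ha⟩ := ((tendsto_cdf1_atBot ν).eventually (eventually_lt_nhds ht.1)).exists
  obtain ⟨b, hb⟩ := ((tendsto_cdf1_atTop ν).eventually (eventually_gt_nhds ht.2)).exists
  exact mem_range_of_exists_le_of_exists_ge (continuous_cdf1 ν hν) ⟨a, ha.le⟩ ⟨b, hb.le⟩

lemma cdf1_map {f : ℝ → ℝ} (hf : Measurable f) (t : ℝ) :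
    cdf1 (ν.map f) t = ν.real {x | f x ≤ t} := by
  unfold cdf1
  rw [Measure.map_apply hf measurableSet_Iic]
  rfl

lemma measurable_cdf1 [IsProbabilityMeasure ν] : Measurable (cdf1 ν) := (cdf1_mono ν).measurable

instance : IsProbabilityMeasure uniform01 := ⟨by simp [uniform01]⟩

/-- The probability integral transform: if `X ∼ ν` has a continuous cdf, then the cdf evaluated
at `X` is uniform. -/
lemma map_cdf1 [IsProbabilityMeasure ν] (hν : ∀ t, ν {t} = 0) : ν.map (cdf1 ν) = uniform01 := by
  have : IsProbabilityMeasure (ν.map (cdf1 ν)) :=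
    Measure.isProbabilityMeasure_map (measurable_cdf1 ν).aemeasurable
  -- the sublevel set at `t` lies in a half-line of mass `u`, for every `u ∈ (0,1)` above `t`
  have key : ∀ t u, u ∈ Ioo (0 : ℝ) 1 → t < u → cdf1 (ν.map (cdf1 ν)) t ≤ u := by
    intro t u hu0 htu
    obtain ⟨x, hx⟩ := exists_cdf1_eq ν hν hu0
    rw [cdf1_map ν (measurable_cdf1 ν)]
    calc ν.real {y | cdf1 ν y ≤ t} ≤ ν.real (Iic x) := by
          refine measureReal_mono fun y hy => ?_
          by_contra hxy
          have := cdf1_mono ν (not_le.1 hxy).le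
          simp only [mem_ofPred_eq] at hy
          linarith
      _ = u := hx
  refine Measure.eq_of_cdf _ _ ?_
  ext t
  rw [← cdf1_eq_cdf, ← cdf1_eq_cdf]
  have hu : cdf1 uniform01 t = (volume (Icc 0 (min t 1))).toReal := by
    unfold cdf1 uniform01
    rw [Measure.restrict_apply measurableSet_Iic]
    congr 2
    ext y
    simp only [mem_inter_iff, mem_Iic, mem_Icc, le_min_iff]
    tauto
  rw [hu, Real.volume_Icc, sub_zero]
  rcases le_or_gt 1 t with h1 | h1
  · rw [min_eq_right h1, cdf1_map ν (measurable_cdf1 ν)]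
    have : {x | cdf1 ν x ≤ t} = univ := eq_univ_of_forall fun x => (cdf1_le_one ν x).trans h1
    simp [this]
  · rw [min_eq_left h1.le]
    rcases le_or_gt t 0 with h0 | h0
    · rw [ENNReal.ofReal_of_nonpos h0]
      refine le_antisymm ?_ (cdf1_nonneg _ _)
      refine le_of_forall_gt_imp_ge_of_dense fun a ha => ?_
      have hm : min a (1 / 2) ∈ Ioo (0 : ℝ) 1 :=
        ⟨lt_min ha (by norm_num), (min_le_right _ _).trans_lt (by norm_num)⟩
      exact (key t _ hm (h0.trans_lt hm.1)).trans (min_le_left _ _)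
    · rw [ENNReal.toReal_ofReal h0.le]
      refine le_antisymm ?_ ?_
      · refine le_of_forall_gt_imp_ge_of_dense fun a ha => ?_
        obtain ⟨b, hb1, hb2⟩ := exists_between (lt_min ha h1)
        exact (key t b ⟨h0.trans hb1, hb2.trans_le (min_le_right _ _)⟩ hb1).trans
          (hb2.le.trans (min_le_left _ _))
      · obtain ⟨x, hx⟩ := exists_cdf1_eq ν hν ⟨h0, h1⟩
        rw [cdf1_map ν (measurable_cdf1 ν)]
        calc t = ν.real (Iic x) := hx.symm
          _ ≤ _ := measureReal_mono fun y hy => (cdf1_mono ν hy).trans hx.le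

/-- The level sets of a continuous cdf are null. -/
lemma cdf1_level_null [IsProbabilityMeasure ν] (hν : ∀ t, ν {t} = 0) (c : ℝ) :
    ν {x | cdf1 ν x = c} = 0 := by
  have h := congrArg (fun m : Measure ℝ => m {c}) (map_cdf1 ν hν)
  simp only [Measure.map_apply (measurable_cdf1 ν) (measurableSet_singleton c)] at h
  refine h.trans ?_
  exact le_antisymm ((Measure.restrict_apply_le _ _).trans (by simp)) zero_le

/-- `F⁻¹(F(x)) = x` for almost every `x`: the exceptional points lie in the level sets of `F`
through rational points. -/
lemma ae_qReal_cdf1 [IsProbabilityMeasure ν] (hν : ∀ t, ν {t} = 0) :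
    ∀ᵐ x ∂ν, qReal ν (cdf1 ν x) = x := by
  have h : ∀ᵐ x ∂ν, ∀ r : ℚ, cdf1 ν x ≠ cdf1 ν r := by
    rw [ae_all_iff]
    intro r
    have := cdf1_level_null ν hν (cdf1 ν r)
    rw [ae_iff]
    simpa using this
  filter_upwards [h] with x hx
  have : {s | cdf1 ν x ≤ cdf1 ν s} = Ici x := by
    ext s
    refine ⟨fun hs => ?_, fun hs => cdf1_mono ν hs⟩
    by_contra hsx
    obtain ⟨r, hr1, hr2⟩ := exists_rat_btwn (lt_of_not_ge hsx : s < x)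
    exact hx r (le_antisymm (le_trans hs (cdf1_mono ν hr1.le)) (cdf1_mono ν hr2.le))
  rw [qReal, this, csInf_Ici]

lemma qReal_set_bddBelow [IsProbabilityMeasure ν] {t : ℝ} (ht : 0 < t) :
    BddBelow {s | t ≤ cdf1 ν s} := by
  obtain ⟨a, ha⟩ := ((tendsto_cdf1_atBot ν).eventually (eventually_lt_nhds ht)).exists
  refine ⟨a, fun s hs => ?_⟩
  by_contra h
  exact absurd (le_trans hs (cdf1_mono ν (not_le.1 h).le)) (not_le.2 ha)

lemma cdf1_qReal [IsProbabilityMeasure ν] (hν : ∀ t, ν {t} = 0) {t : ℝ}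
    (ht : t ∈ Ioo (0 : ℝ) 1) : cdf1 ν (qReal ν t) = t := by
  obtain ⟨x, hx⟩ := exists_cdf1_eq ν hν ht
  have hb := qReal_set_bddBelow ν ht.1
  have hclosed : IsClosed {s | t ≤ cdf1 ν s} :=
    isClosed_le continuous_const (continuous_cdf1 ν hν)
  refine le_antisymm ?_ (hclosed.csInf_mem ⟨x, hx.ge⟩ hb)
  exact (cdf1_mono ν (csInf_le hb hx.ge)).trans hx.le

/-- The real-valued quantile function is monotone on `(0,1)`, hence measurable: it vanishes
outside `(0,1]` because the infimum defining it is then a junk value. -/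
lemma measurable_qReal [IsProbabilityMeasure ν] : Measurable (qReal ν) := by
  have hmono : MonotoneOn (qReal ν) (Ioo 0 1) := by
    intro a ha b hb hab
    obtain ⟨x, hx⟩ := ((tendsto_cdf1_atTop ν).eventually (eventually_gt_nhds hb.2)).exists
    exact csInf_le_csInf (qReal_set_bddBelow ν ha.1) ⟨x, hx.le⟩ fun s hs => hab.trans hs
  have hlow : ∀ t ≤ (0 : ℝ), qReal ν t = 0 := by
    intro t ht
    have : {s | t ≤ cdf1 ν s} = univ := eq_univ_of_forall fun s => ht.trans (cdf1_nonneg ν s)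
    rw [qReal, this, Real.sInf_univ]
  have hhigh : ∀ t, (1 : ℝ) < t → qReal ν t = 0 := by
    intro t ht
    have : {s | t ≤ cdf1 ν s} = ∅ :=
      eq_empty_of_forall_notMem fun s hs => absurd (le_trans hs (cdf1_le_one ν s)) (not_le.2 ht)
    rw [qReal, this, Real.sInf_empty]
  have h1 : Measurable ((Ioo (0 : ℝ) 1).domRestrict (qReal ν)) := by
    apply Monotone.measurable
    intro a b hab
    exact hmono a.2 b.2 hab
  have h2 : Measurable ((Ioo (0 : ℝ) 1)ᶜ.domRestrict (qReal ν)) := by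
    have : (Ioo (0 : ℝ) 1)ᶜ.domRestrict (qReal ν)
        = fun x : ((Ioo (0 : ℝ) 1)ᶜ : Set ℝ) => if (x : ℝ) = 1 then qReal ν 1 else 0 := by
      ext ⟨x, hx⟩
      simp only [domRestrict_apply]
      split_ifs with h
      · rw [h]
      · rcases le_or_gt x 0 with h0 | h0
        · exact hlow x h0
        · refine hhigh x (lt_of_le_of_ne ?_ (Ne.symm h))
          by_contra hlt
          exact hx ⟨h0, not_le.1 hlt⟩
    rw [this]
    exact Measurable.ite (measurable_subtype_coe (measurableSet_singleton (1 : ℝ)))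
      measurable_const measurable_const
  exact measurable_of_restrict_of_restrict_compl measurableSet_Ioo h1 h2

end OneDim

/-! ### Sklar's theorem for continuous marginals -/

section Sklar

variable (μ : Measure (Fin d → ℝ))

lemma marg_prob [IsProbabilityMeasure μ] (i : Fin d) : IsProbabilityMeasure (marg μ i) :=
  Measure.isProbabilityMeasure_map (measurable_pi_apply i).aemeasurable

lemma marg_map {f : Fin d → ℝ → ℝ} (hf : ∀ i, Measurable (f i)) (i : Fin d) :
    marg (μ.map fun x j => f j (x j)) i = (marg μ i).map (f i) := by
  unfold marg
  have hm : Measurable fun (x : Fin d → ℝ) j => f j (x j) := by fun_prop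
  rw [Measure.map_map (measurable_pi_apply i) hm, Measure.map_map (hf i) (measurable_pi_apply i)]
  rfl

/-- A coordinatewise almost sure identity transfers to images under the product map. -/
lemma map_coord_congr {f g : Fin d → ℝ → ℝ} (h : ∀ i, ∀ᵐ t ∂(marg μ i), f i t = g i t) :
    (μ.map fun x j => f j (x j)) = μ.map fun x j => g j (x j) := by
  refine Measure.map_congr ?_
  have : ∀ᵐ x ∂μ, ∀ i, f i (x i) = g i (x i) :=
    ae_all_iff.2 fun i => ae_of_ae_map (measurable_pi_apply i).aemeasurable (h i)
  filter_upwards [this] with x hx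
  exact funext hx

/-- A distribution with continuous marginals is recovered from its marginals and its copula. -/
lemma joinCopula_copulaOf [IsProbabilityMeasure μ] (hμ : ∀ i t, marg μ i {t} = 0) :
    joinCopula (marg μ) (copulaOf μ) = μ := by
  have hp := marg_prob μ
  unfold joinCopula copulaOf
  have h1 : Measurable fun (u : Fin d → ℝ) i => qReal (marg μ i) (u i) :=
    measurable_pi_lambda _ fun i => (measurable_qReal _).comp (measurable_pi_apply i)
  have h2 : Measurable fun (u : Fin d → ℝ) i => cdf1 (marg μ i) (u i) :=
    measurable_pi_lambda _ fun i => (measurable_cdf1 _).comp (measurable_pi_apply i)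
  rw [Measure.map_map h1 h2]
  refine (map_coord_congr μ (f := fun i t => qReal (marg μ i) (cdf1 (marg μ i) t))
    (g := fun _ t => t) fun i => ae_qReal_cdf1 _ (hμ i)).trans ?_
  exact Measure.map_id

lemma isCopula_copulaOf [IsProbabilityMeasure μ] (hμ : ∀ i t, marg μ i {t} = 0) :
    IsCopula (copulaOf μ) := by
  have hp := marg_prob μ
  have h2 : Measurable fun (u : Fin d → ℝ) i => cdf1 (marg μ i) (u i) :=
    measurable_pi_lambda _ fun i => (measurable_cdf1 _).comp (measurable_pi_apply i)
  refine ⟨Measure.isProbabilityMeasure_map h2.aemeasurable, fun i => ?_⟩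
  unfold copulaOf
  rw [marg_map μ (f := fun i => cdf1 (marg μ i)) (fun i => measurable_cdf1 _) i]
  exact map_cdf1 _ (hμ i)

/-- Uniqueness of the copula when the marginals are continuous. -/
lemma eq_copulaOf_of_isCopulaOf [IsProbabilityMeasure μ] (hμ : ∀ i t, marg μ i {t} = 0)
    {C : Measure (Fin d → ℝ)} (hC : IsCopulaOf C μ) : C = copulaOf μ := by
  have hp := marg_prob μ
  obtain ⟨⟨_, hunif⟩, hjoin⟩ := hC
  have h1 : Measurable fun (u : Fin d → ℝ) i => qReal (marg μ i) (u i) :=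
    measurable_pi_lambda _ fun i => (measurable_qReal _).comp (measurable_pi_apply i)
  have h2 : Measurable fun (u : Fin d → ℝ) i => cdf1 (marg μ i) (u i) :=
    measurable_pi_lambda _ fun i => (measurable_cdf1 _).comp (measurable_pi_apply i)
  have hcop : copulaOf μ
      = (joinCopula (marg μ) C).map fun x i => cdf1 (marg μ i) (x i) := by
    rw [← hjoin]; rfl
  rw [hcop, joinCopula, Measure.map_map h2 h1]
  refine (Measure.map_id (μ := C)).symm.trans (map_coord_congr C (f := fun _ t => t)
    (g := fun i t => cdf1 (marg μ i) (qReal (marg μ i) t)) fun i => ?_)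
  rw [hunif i, uniform01, ← restrict_Ioo_eq_restrict_Icc, ae_restrict_iff' measurableSet_Ioo]
  exact Filter.Eventually.of_forall fun t ht => (cdf1_qReal _ (hμ i) ht).symm

end Sklar

/-! ### Order statistics and symmetrization -/

section Sym

lemma orderStat_of_monotone {x : Fin d → ℝ} (σ : Equiv.Perm (Fin d)) (hx : Monotone (x ∘ σ)) :
    orderStat x = x ∘ σ :=
  (Tuple.comp_sort_eq_comp_iff_monotone.2 hx).symm

lemma orderStat_comp_perm (x : Fin d → ℝ) (σ : Equiv.Perm (Fin d)) (hx : Monotone x) :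
    orderStat (fun i => x (σ i)) = x :=
  (orderStat_of_monotone (x := fun i => x (σ i)) σ⁻¹ (by
    intro i j hij; simpa using hx hij)).trans (by ext i; simp)

lemma measurable_orderStat : Measurable (orderStat : (Fin d → ℝ) → Fin d → ℝ) := by
  intro A hA
  have hcomp : ∀ σ : Equiv.Perm (Fin d), Measurable fun x : Fin d → ℝ => x ∘ σ := fun σ =>
    measurable_pi_lambda _ fun i => measurable_pi_apply (σ i)
  have : orderStat ⁻¹' A = ⋃ σ : Equiv.Perm (Fin d),
      (fun x : Fin d → ℝ => x ∘ σ) ⁻¹' ({y | Monotone y} ∩ A) := by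
    ext x
    simp only [mem_preimage, mem_iUnion, mem_inter_iff, mem_ofPred_eq]
    constructor
    · intro hx
      exact ⟨Tuple.sort x, Tuple.monotone_sort x, hx⟩
    · rintro ⟨σ, hσ, hA⟩
      rwa [orderStat_of_monotone σ hσ]
  rw [this]
  exact MeasurableSet.iUnion fun σ => hcomp σ (isClosed_monotone.measurableSet.inter hA)

lemma sum_perm_apply [NeZero d] (f : Fin d → ℝ) (i : Fin d) :
    (d.factorial : ℝ)⁻¹ * ∑ π : Equiv.Perm (Fin d), f (π i) = (∑ j, f j) / d := by
  have h1 : ∀ j, ∑ π : Equiv.Perm (Fin d), f (π j) = ∑ π : Equiv.Perm (Fin d), f (π i) := by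
    intro j
    refine Fintype.sum_equiv (Equiv.mulRight (Equiv.swap i j)) _ _ fun π => ?_
    simp
  have h2 : ∑ j, ∑ π : Equiv.Perm (Fin d), f (π j) = d.factorial * ∑ j, f j := by
    rw [Finset.sum_comm]
    simp_rw [fun π : Equiv.Perm (Fin d) => Equiv.sum_comp π f]
    simp [Fintype.card_perm]
  simp_rw [h1] at h2
  simp only [Finset.sum_const, Finset.card_univ, Fintype.card_fin, nsmul_eq_mul] at h2
  have hd : (d : ℝ) ≠ 0 := Nat.cast_ne_zero.2 (NeZero.ne d)
  have hd' : (d.factorial : ℝ) ≠ 0 := Nat.cast_ne_zero.2 (Nat.factorial_ne_zero d)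
  field_simp
  linarith

lemma measurable_comp_perm (π : Equiv.Perm (Fin d)) :
    Measurable fun (x : Fin d → ℝ) i => x (π i) :=
  measurable_pi_lambda _ fun i => measurable_pi_apply (π i)

/-- The marginals of the symmetrization all have the averaged cdf `G`. -/
lemma cdf1_marg_symmetrize [NeZero d] (μ : Measure (Fin d → ℝ)) [IsProbabilityMeasure μ]
    (i : Fin d) (t : ℝ) : cdf1 (marg (symmetrize μ) i) t = Gbar (marg μ) t := by
  have hp := marg_prob μ
  unfold Gbar
  rw [← sum_perm_apply _ i]
  have h : marg (symmetrize μ) i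
      = (d.factorial : ℝ≥0∞)⁻¹ • ∑ π : Equiv.Perm (Fin d), marg μ (π i) := by
    unfold marg symmetrize
    rw [Measure.map_smul, Measure.map_finset_sum' (measurable_pi_apply i).aemeasurable]
    congr 1
    refine Finset.sum_congr rfl fun π _ => ?_
    rw [Measure.map_map (measurable_pi_apply i) (measurable_comp_perm π)]
    rfl
  unfold cdf1
  rw [h, Measure.smul_apply, Measure.finsetSum_apply, smul_eq_mul, ENNReal.toReal_mul,
    ENNReal.toReal_sum fun _ _ => measure_ne_top _ _]
  simp

/-- If `X ∼ μ` is almost surely nondecreasing, then sorting `(g(X_Π(1)), …, g(X_Π(d)))` with `g`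
nondecreasing returns `(g(X_1), …, g(X_d))`. -/
lemma map_orderStat_symmetrize (μ : Measure (Fin d → ℝ))
    (hmon : ∀ᵐ x ∂μ, Monotone x) {g : ℝ → ℝ} (hg : Monotone g) :
    (((symmetrize μ).map fun x i => g (x i)).map orderStat) = μ.map fun x i => g (x i) := by
  have hgm : Measurable fun (x : Fin d → ℝ) i => g (x i) :=
    measurable_pi_lambda _ fun i => hg.measurable.comp (measurable_pi_apply i)
  rw [Measure.map_map measurable_orderStat hgm]
  have hm := measurable_orderStat.comp hgm
  unfold symmetrize
  rw [Measure.map_smul, Measure.map_finset_sum' hm.aemeasurable]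
  have h : ∀ π : Equiv.Perm (Fin d),
      ((μ.map fun x i => x (π i)).map (orderStat ∘ fun (x : Fin d → ℝ) i => g (x i)))
        = μ.map fun x i => g (x i) := by
    intro π
    rw [Measure.map_map hm (measurable_comp_perm π)]
    refine Measure.map_congr ?_
    filter_upwards [hmon] with x hx
    exact orderStat_comp_perm (fun i => g (x i)) π (hg.comp hx)
  simp_rw [h]
  rw [Finset.sum_const, Finset.card_univ, Fintype.card_perm, Fintype.card_fin,
    ← Nat.cast_smul_eq_nsmul ℝ≥0∞, smul_smul, ENNReal.inv_mul_cancel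
      (Nat.cast_ne_zero.2 (Nat.factorial_ne_zero d)) (ENNReal.natCast_ne_top _), one_smul]

end Sym

/-! ### The averaged cdf and the multidiagonal -/

section Avg

variable {F : Fin d → Measure ℝ}

lemma GbarE_coe (x : ℝ) : GbarE F (x : EReal) = Gbar F x := by
  unfold GbarE Gbar cdfE cdf1
  simp only [EReal.coe_le_coe_iff]
  rfl

lemma ae_monotone_of_isCdfOS {μ : Measure (Fin d → ℝ)} (hμ : IsCdfOS F μ) :
    ∀ᵐ x ∂μ, Monotone x := by
  have := hμ.1
  exact (prob_compl_eq_zero_iff isClosed_monotone.measurableSet).2 hμ.2.1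

lemma multidiag_eq_marg (ν : Measure (Fin d → ℝ)) : multidiag ν = marg (ν.map orderStat) := by
  ext1 i
  unfold multidiag marg
  rw [Measure.map_map (measurable_pi_apply i) measurable_orderStat]
  rfl

variable [NeZero d]

lemma Gbar_mono (hF : IsMargOS F) : Monotone (Gbar F) := by
  have := hF.prob
  intro a b h
  unfold Gbar
  gcongr with i
  exact cdf1_mono _ h

lemma continuous_Gbar (hF : IsMargOS F) : Continuous (Gbar F) := by
  have := hF.prob
  unfold Gbar
  exact (continuous_finsetSum _ fun i _ => continuous_cdf1 _ (hF.cont i)).div_const _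

lemma Gbar_le_one (hF : IsMargOS F) (t : ℝ) : Gbar F t ≤ 1 := by
  have := hF.prob
  have hd : (0 : ℝ) < d := Nat.cast_pos.2 (Nat.pos_of_ne_zero (NeZero.ne d))
  unfold Gbar
  rw [div_le_one hd]
  calc ∑ i, cdf1 (F i) t ≤ ∑ _i : Fin d, (1 : ℝ) := Finset.sum_le_sum fun i _ => cdf1_le_one _ t
    _ = d := by simp

lemma tendsto_Gbar_atTop (hF : IsMargOS F) : Filter.Tendsto (Gbar F) Filter.atTop (nhds 1) := by
  have := hF.prob
  have hd : (d : ℝ) ≠ 0 := Nat.cast_ne_zero.2 (NeZero.ne d)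
  have h := (tendsto_finsetSum Finset.univ fun i _ => tendsto_cdf1_atTop (F i)).div_const (d : ℝ)
  have h1 : (∑ _i : Fin d, (1 : ℝ)) / d = 1 := by simp [hd]
  rw [h1] at h
  exact h

/-- Wherever `G` is constant, so is each `F_i`: the increments of the `F_i` are nonnegative and
sum to those of `d G`. -/
lemma cdf1_eq_of_Gbar_eq (hF : IsMargOS F) {x y : ℝ} (h : Gbar F x = Gbar F y) (i : Fin d) :
    cdf1 (F i) x = cdf1 (F i) y := by
  wlog hxy : x ≤ y generalizing x y
  · exact (this h.symm (not_le.1 hxy).le).symm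
  have := hF.prob
  have hd : (d : ℝ) ≠ 0 := Nat.cast_ne_zero.2 (NeZero.ne d)
  have hs : ∑ i, cdf1 (F i) x = ∑ i, cdf1 (F i) y := by
    unfold Gbar at h
    field_simp at h
    exact h
  exact (Finset.sum_eq_sum_iff_of_le fun i _ => cdf1_mono (F i) hxy).1 hs i (Finset.mem_univ i)

lemma Gbar_level_null (hF : IsMargOS F) (i : Fin d) (c : ℝ) : F i {x | Gbar F x = c} = 0 := by
  have := hF.prob
  by_cases hne : ∃ x, Gbar F x = c
  · obtain ⟨x, hx⟩ := hne
    refine measure_mono_null (fun y hy => ?_) (cdf1_level_null (F i) (hF.cont i) (cdf1 (F i) x))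
    exact cdf1_eq_of_Gbar_eq hF (Eq.trans hy hx.symm) i
  · push Not at hne
    simp [hne]

lemma mdiagF_prob (hF : IsMargOS F) (i : Fin d) : IsProbabilityMeasure (mdiagF F i) := by
  have := hF.prob
  exact Measure.isProbabilityMeasure_map (Gbar_mono hF).measurable.aemeasurable

lemma mdiagF_singleton (hF : IsMargOS F) (i : Fin d) (c : ℝ) : mdiagF F i {c} = 0 := by
  unfold mdiagF
  rw [Measure.map_apply (Gbar_mono hF).measurable (measurableSet_singleton c)]
  exact Gbar_level_null hF i c

/-- `δ_(i)(G(x)) = F_i(x)`. -/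
lemma cdf1_mdiagF_Gbar (hF : IsMargOS F) (i : Fin d) (x : ℝ) :
    cdf1 (mdiagF F i) (Gbar F x) = cdf1 (F i) x := by
  have := hF.prob
  unfold mdiagF
  rw [cdf1_map _ (Gbar_mono hF).measurable]
  refine measureReal_congr ?_
  have h := Gbar_level_null hF i (Gbar F x)
  have h' : ∀ᵐ y ∂(F i), Gbar F y ≠ Gbar F x := by rw [ae_iff]; simpa using h
  filter_upwards [h'] with y hy
  refine propext ⟨fun hle => ?_, fun hle => Gbar_mono hF hle⟩
  by_contra hyx
  exact hy (le_antisymm hle (Gbar_mono hF (not_le.1 hyx).le))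

/-- `δ_(i) = F_i ∘ G⁻¹`. -/
lemma cdf1_mdiagF (hF : IsMargOS F) (i : Fin d) (t : ℝ) :
    cdf1 (mdiagF F i) t = cdfE (F i) (qInvE (Gbar F) t) := by
  have := hF.prob
  unfold mdiagF
  rw [cdf1_map _ (Gbar_mono hF).measurable]
  have h1 : ∀ᵐ y ∂(F i), Gbar F y ≠ t := by
    rw [ae_iff]; simpa using Gbar_level_null hF i t
  have h2 : ∀ᵐ (y : ℝ) ∂(F i), (y : EReal) ≠ qInvE (Gbar F) t := by
    rw [ae_iff]
    refine measure_mono_null (fun y hy => ?_) (hF.cont i (qInvE (Gbar F) t).toReal)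
    have hy' : (y : EReal) = qInvE (Gbar F) t := by simpa using hy
    rw [mem_singleton_iff, ← hy', EReal.toReal_coe]
  refine measureReal_congr (t := {s : ℝ | (s : EReal) ≤ qInvE (Gbar F) t}) ?_
  filter_upwards [h1, h2] with y hy1 hy2
  refine propext ⟨fun hle => ?_, fun hle => ?_⟩
  · have hlt : Gbar F y < t := lt_of_le_of_ne hle hy1
    refine le_sInf ?_
    rintro _ ⟨s, hs, rfl⟩
    refine EReal.coe_le_coe_iff.2 ?_
    by_contra hsy
    exact absurd (le_trans hs (Gbar_mono hF (not_le.1 hsy).le)) (not_le.2 hlt)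
  · by_contra hgt
    have htgt : t < Gbar F y := not_le.1 hgt
    have : qInvE (Gbar F) t ≤ (y : EReal) := sInf_le ⟨y, htgt.le, rfl⟩
    exact hy2 (le_antisymm hle this)

lemma GbarE_top (hF : IsMargOS F) : GbarE F ⊤ = 1 := by
  have := hF.prob
  have hd : (d : ℝ) ≠ 0 := Nat.cast_ne_zero.2 (NeZero.ne d)
  simp [GbarE, cdfE, hd]

/-- `δ_(i)⁻¹ = G ∘ F_i⁻¹`: the superlevel set `{s | t ≤ δ_(i)(s)}` is the half-line starting at
`G(F_i⁻¹(t))`. -/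
lemma qInvE_mdiagF (hF : IsMargOS F) (i : Fin d) {t : ℝ} (ht : t ∈ Ioc (0 : ℝ) 1) :
    qInvE (cdf1 (mdiagF F i)) t = ((GbarE F (qInvE (cdf1 (F i)) t) : ℝ) : EReal) := by
  have := hF.prob
  have hmono := Gbar_mono hF
  set q := qInvE (cdf1 (F i)) t with hq
  have hlt : ∀ x : ℝ, (x : EReal) < q → cdf1 (F i) x < t := by
    intro x hx
    by_contra h
    exact absurd (sInf_le ⟨x, not_lt.1 h, rfl⟩ : q ≤ x) (not_le.2 hx)
  suffices hset : {s | t ≤ cdf1 (mdiagF F i) s} = Ici (GbarE F q) by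
    rw [qInvE, hset]
    refine IsLeast.csInf_eq ⟨⟨_, self_mem_Ici, rfl⟩, ?_⟩
    rintro _ ⟨s, hs, rfl⟩
    exact EReal.coe_le_coe_iff.2 hs
  -- a level `s` below `G(x)` with `x < F_i⁻¹(t)` has `δ_(i)(s) ≤ F_i(x) < t`
  have hsmall : ∀ s x : ℝ, (x : EReal) < q → s < Gbar F x → cdf1 (mdiagF F i) s < t := by
    intro s x hxq hsx
    have := mdiagF_prob hF i
    calc cdf1 (mdiagF F i) s ≤ cdf1 (mdiagF F i) (Gbar F x) := cdf1_mono _ hsx.le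
      _ = cdf1 (F i) x := cdf1_mdiagF_Gbar hF i x
      _ < t := hlt x hxq
  have hprob := mdiagF_prob hF i
  ext s
  simp only [mem_ofPred_eq, mem_Ici]
  induction hqq : q with
  | bot =>
    obtain ⟨a, ha⟩ := ((tendsto_cdf1_atBot (F i)).eventually (eventually_lt_nhds ht.1)).exists
    have : (a : EReal) ≤ q := by
      refine le_sInf ?_
      rintro _ ⟨s, hs, rfl⟩
      refine EReal.coe_le_coe_iff.2 ?_
      by_contra h
      exact absurd (le_trans hs (cdf1_mono (F i) (not_le.1 h).le)) (not_le.2 ha)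
    rw [hqq] at this
    exact absurd this (by simp)
  | coe r =>
    rw [GbarE_coe]
    constructor
    · intro hs
      by_contra hnot
      -- by continuity of `G`, the strict inequality `s < G(r)` persists slightly left of `r`
      have hev : ∀ᶠ x in nhdsWithin r (Iio r), s < Gbar F x :=
        ((continuous_Gbar hF).continuousAt.eventually
          (eventually_gt_nhds (not_le.1 hnot))).filter_mono nhdsWithin_le_nhds
      obtain ⟨x, hx1, hx2⟩ := (hev.and self_mem_nhdsWithin).exists
      refine absurd hs (not_le.2 (hsmall s x ?_ hx1))
      rw [hqq]
      exact EReal.coe_lt_coe_iff.2 hx2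
    · intro hs
      have hr : t ≤ cdf1 (F i) r := by
        refine ge_of_tendsto (x := nhdsWithin r (Ioi r))
          ((continuous_cdf1 (F i) (hF.cont i)).continuousAt.tendsto.mono_left nhdsWithin_le_nhds)
          ?_
        filter_upwards [self_mem_nhdsWithin] with x hx
        have : q < (x : EReal) := by rw [hqq]; exact EReal.coe_lt_coe_iff.2 hx
        obtain ⟨_, ⟨y, hy, rfl⟩, hyx⟩ := sInf_lt_iff.1 this
        exact le_trans hy (cdf1_mono (F i) (EReal.coe_lt_coe_iff.1 hyx).le)
      calc t ≤ cdf1 (F i) r := hr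
        _ = cdf1 (mdiagF F i) (Gbar F r) := (cdf1_mdiagF_Gbar hF i r).symm
        _ ≤ _ := cdf1_mono _ hs
  | top =>
    rw [GbarE_top hF]
    constructor
    · intro hs
      by_contra hnot
      obtain ⟨x, hx⟩ := ((tendsto_Gbar_atTop hF).eventually
        (eventually_gt_nhds (not_le.1 hnot))).exists
      refine absurd hs (not_le.2 (hsmall s x ?_ hx))
      rw [hqq]
      exact EReal.coe_lt_top x
    · intro hs
      have huniv : {x | Gbar F x ≤ s} = univ :=
        eq_univ_of_forall fun x => (Gbar_le_one hF x).trans hs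
      rw [mdiagF, cdf1_map _ hmono.measurable, huniv]
      simpa using ht.2

/-- For `X ∼ μ` an order statistic with marginals `F` and copula `C`, the order statistics of
`U ∼ S_F(C)` are distributed as `(G(X_1), …, G(X_d))`. -/
lemma map_orderStat_SF (hF : IsMargOS F) {μ : Measure (Fin d → ℝ)} (hμ : IsCdfOS F μ) :
    (SF F (copulaOf μ)).map orderStat = μ.map fun x i => Gbar F (x i) := by
  have := hμ.1
  have hmarg : marg μ = F := funext hμ.2.2
  have hjoin : joinCopula F (copulaOf μ) = μ := by
    have h := joinCopula_copulaOf μ (by rw [hmarg]; exact hF.cont)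
    rwa [hmarg] at h
  have hcdf : ∀ i t, cdf1 (marg (symmetrize μ) i) t = Gbar F t := by
    intro i t
    rw [cdf1_marg_symmetrize, hmarg]
  unfold SF
  rw [hjoin]
  conv_lhs => unfold copulaOf
  simp_rw [hcdf]
  exact map_orderStat_symmetrize μ (ae_monotone_of_isCdfOS hμ) (Gbar_mono hF)

lemma marg_map_Gbar (hF : IsMargOS F) {μ : Measure (Fin d → ℝ)} (hμ : IsCdfOS F μ) :
    marg (μ.map fun x i => Gbar F (x i)) = mdiagF F := by
  ext1 i
  rw [marg_map μ (f := fun _ => Gbar F) (fun _ => (Gbar_mono hF).measurable) i, hμ.2.2 i]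
  rfl

/-- Applying `G` to every coordinate does not change the copula, because `δ_(i)(G(x)) = F_i(x)`. -/
lemma copulaOf_map_Gbar (hF : IsMargOS F) {μ : Measure (Fin d → ℝ)} (hμ : IsCdfOS F μ) :
    copulaOf (μ.map fun x i => Gbar F (x i)) = copulaOf μ := by
  have hG := (Gbar_mono hF).measurable
  have hmdp := mdiagF_prob hF
  have hGm : Measurable fun (x : Fin d → ℝ) i => Gbar F (x i) :=
    measurable_pi_lambda _ fun i => hG.comp (measurable_pi_apply i)
  have h2 : Measurable fun (u : Fin d → ℝ) i => cdf1 (mdiagF F i) (u i) :=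
    measurable_pi_lambda _ fun i => (measurable_cdf1 _).comp (measurable_pi_apply i)
  have hmarg : marg μ = F := funext hμ.2.2
  unfold copulaOf
  rw [marg_map_Gbar hF hμ, Measure.map_map h2 hGm, hmarg]
  congr 1
  ext x i
  exact cdf1_mdiagF_Gbar hF i (x i)

end Avg

/-- Lemma `lem:delta_SFC`.  Let `F = (F_1, …, F_d)` be a `d`-tuple of
continuous cdfs on `ℝ` with `F_{i-1} ≥ F_i` pointwise, let `C ∈ C^OS(F)`, and consider the
multidiagonal `δ^F = (δ_(1), …, δ_(d))` of `S_F(C)` (the one-dimensional marginal cdfs of the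
order statistics `U^OS` of `U ∼ S_F(C)`).  Then `δ^F` does not depend on `C`, it satisfies
`δ_(i) = F_i ∘ G^{-1}` and `δ_(i)^{-1} = G ∘ F_i^{-1}` for all `i`, where
`G = (1/d) ∑ F_i`.  Furthermore `C` is the unique copula of `U^OS`. -/
theorem stmt_10 {d : ℕ} [NeZero d] (F : Fin d → Measure ℝ) (hF : IsMargOS F)
    (C : Measure (Fin d → ℝ)) (hC : C ∈ copulaOS F) :
    (∀ C' : Measure (Fin d → ℝ), C' ∈ copulaOS F →
      multidiag (SF F C') = multidiag (SF F C)) ∧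
    (∀ (i : Fin d) (t : ℝ), cdf1 (multidiag (SF F C) i) t = cdfE (F i) (qInvE (Gbar F) t)) ∧
    (∀ i : Fin d, ∀ t ∈ Ioc (0 : ℝ) 1,
      qInvE (cdf1 (multidiag (SF F C) i)) t
        = ((GbarE F (qInvE (cdf1 (F i)) t) : ℝ) : EReal)) ∧
    IsCopulaOf C ((SF F C).map orderStat) ∧
    ∀ C'' : Measure (Fin d → ℝ), IsCopulaOf C'' ((SF F C).map orderStat) → C'' = C := by
  have hmd : ∀ C' ∈ copulaOS F, multidiag (SF F C') = mdiagF F := by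
    rintro _ ⟨μ', hμ', rfl⟩
    rw [multidiag_eq_marg, map_orderStat_SF hF hμ', marg_map_Gbar hF hμ']
  refine ⟨fun C' hC' => by rw [hmd C' hC', hmd C hC], fun i t => ?_, fun i t ht => ?_, ?_⟩
  · rw [hmd C hC]
    exact cdf1_mdiagF hF i t
  · rw [hmd C hC]
    exact qInvE_mdiagF hF i ht
  obtain ⟨μ, hμ, rfl⟩ := hC
  rw [map_orderStat_SF hF hμ]
  set ν := μ.map fun x i => Gbar F (x i) with hν
  have hμp := hμ.1
  have hGm : Measurable fun (x : Fin d → ℝ) i => Gbar F (x i) :=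
    measurable_pi_lambda _ fun i => (Gbar_mono hF).measurable.comp (measurable_pi_apply i)
  have hνp : IsProbabilityMeasure ν := Measure.isProbabilityMeasure_map hGm.aemeasurable
  have hatom : ∀ i t, marg ν i {t} = 0 := by
    rw [marg_map_Gbar hF hμ]
    exact mdiagF_singleton hF
  have hcop : copulaOf ν = copulaOf μ := copulaOf_map_Gbar hF hμ
  rw [← hcop]
  exact ⟨⟨isCopula_copulaOf ν hatom, (joinCopula_copulaOf ν hatom).symm⟩,
    fun C'' h => eq_copulaOf_of_isCopulaOf ν hatom h⟩

end MaxEntOS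
end
end

section
/- Let X be a random vector on ℝ^d, X^OS its order statistics, and Π a uniform random permutation of {1,…,d} independent of X. Then H((X^OS)_Π) = log(d!) + H(X^OS), where (X^OS)_Π is the vector obtained from X^OS by permuting its components by Π. -/
/-! The law `ν` of the order statistics is carried by monotone vectors. If it is not absolutely
continuous, neither is its symmetrization (which dominates `ν / d!`), and both entropies are `⊥`.

Otherwise ties are Lebesgue-null, so `ν` has a density `f` vanishing off the open Weyl chamber
`x₁ < ⋯ < x_d`. The symmetrized density is `g x = (1 / d!) ∑ π, f (x ∘ π)`, and the permuted
chambers are pairwise disjoint, so at every point at most one summand is nonzero. Hence for any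
`φ` with `φ 0 = 0` one has `∫ φ(g) = d! ∫ φ(f / d!)` (`lintegral_symDens`). Taking for `φ` the
positive and negative parts of `t log t` turns the entropy integrand into `f log f - f log d!`;
since `∫ f = 1`, both parts change by at most `log d!`, and their difference by exactly
`log d!` (`dEntropy_symDens`). The bounds on each part make the identity hold in `EReal` also
when one or both parts are infinite (`ereal_sub_shift`). -/

/- Formalization framework for "Maximum entropy distribution of order statistics with given
marginals" (Butucea, Delmas, Dutfoy, Fischer).  One-dimensional cdfs are identified with
(probability) measures on `ℝ`, and cdfs on `ℝ^d` with measures on `Fin d → ℝ`. -/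

open MeasureTheory Set
open scoped ENNReal

noncomputable section

namespace MaxEntOS

variable {d : ℕ}

/-! ### Permuting coordinates -/

/-- Reordering the coordinates by `π`. -/
def permMap (π : Equiv.Perm (Fin d)) (x : Fin d → ℝ) : Fin d → ℝ := fun i => x (π i)

lemma measurePreserving_permMap (π : Equiv.Perm (Fin d)) :
    MeasurePreserving (permMap π) (volume : Measure (Fin d → ℝ)) volume := by
  have h := volume_measurePreserving_piCongrLeft (fun _ : Fin d => ℝ) π.symm
  have e : (MeasurableEquiv.piCongrLeft (fun _ : Fin d => ℝ) π.symm : (Fin d → ℝ) → Fin d → ℝ)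
      = permMap π := by
    funext x i
    obtain ⟨j, rfl⟩ := π.symm.surjective i
    rw [MeasurableEquiv.coe_piCongrLeft, Equiv.piCongrLeft_apply_apply]
    simp [permMap]
  rwa [e] at h

lemma map_permMap_withDensity (π : Equiv.Perm (Fin d)) {f : (Fin d → ℝ) → ℝ≥0∞}
    (hf : Measurable f) :
    (volume.withDensity f).map (permMap π) = volume.withDensity fun x => f (permMap π⁻¹ x) := by
  have hm := (measurePreserving_permMap π).measurable
  have hm' : Measurable fun x => f (permMap π⁻¹ x) :=
    hf.comp (measurePreserving_permMap π⁻¹).measurable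
  ext s hs
  rw [Measure.map_apply hm hs, withDensity_apply _ (hm hs), withDensity_apply _ hs,
    ← (measurePreserving_permMap π).setLIntegral_comp_preimage hs hm']
  refine lintegral_congr fun x => congrArg f ?_
  funext i
  simp [permMap]

/-- The open Weyl chamber: vectors with strictly increasing coordinates. -/
def chamber (d : ℕ) : Set (Fin d → ℝ) := {x | StrictMono x}

lemma measurableSet_chamber : MeasurableSet (chamber d) := by
  have : chamber d = {x | ∀ i j, i < j → x i < x j} := rfl
  rw [this]
  measurability

lemma ae_injective : ∀ᵐ x : Fin d → ℝ, Function.Injective x := by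
  have h : ∀ i j : Fin d, i ≠ j → ∀ᵐ x : Fin d → ℝ, x i ≠ x j := by
    intro i j hij
    let L : (Fin d → ℝ) →ₗ[ℝ] ℝ := LinearMap.proj (R := ℝ) (φ := fun _ => ℝ) i - LinearMap.proj j
    have hL : LinearMap.ker L ≠ ⊤ := by
      intro h
      have : (Pi.single i 1 : Fin d → ℝ) ∈ LinearMap.ker L := by rw [h]; exact Submodule.mem_top
      simp [L, hij.symm] at this
    have h0 := Measure.addHaar_submodule (volume : Measure (Fin d → ℝ)) _ hL
    rw [ae_iff]
    convert h0 using 2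
    ext x
    simp [L, sub_eq_zero]
  have h' : ∀ᵐ x : Fin d → ℝ, ∀ i j, i ≠ j → x i ≠ x j := by
    refine ae_all_iff.2 fun i => ae_all_iff.2 fun j => ?_
    by_cases hij : i = j
    · simp [hij]
    · filter_upwards [h i j hij] with x hx _ using hx
  filter_upwards [h'] with x hx i j hij
  by_contra hne
  exact hx i j hne hij

lemma ae_chamber {μ : Measure (Fin d → ℝ)} (hac : μ.map orderStat ≪ volume) :
    ∀ᵐ x ∂(μ.map orderStat), x ∈ chamber d := by
  have hmono : ∀ᵐ x ∂(μ.map orderStat), Monotone x := by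
    have hM : MeasurableSet {x : Fin d → ℝ | Monotone x} := by
      have : {x : Fin d → ℝ | Monotone x} = {x | ∀ i j, i ≤ j → x i ≤ x j} := rfl
      rw [this]
      measurability
    rw [ae_map_iff measurable_orderStat.aemeasurable hM]
    exact Filter.Eventually.of_forall fun x => Tuple.monotone_sort x
  filter_upwards [hmono, hac.ae_le ae_injective] with x h1 h2 using h1.strictMono_of_injective h2

lemma perm_unique {x : Fin d → ℝ} {π ρ : Equiv.Perm (Fin d)} (h1 : permMap π x ∈ chamber d)
    (h2 : permMap ρ x ∈ chamber d) : π = ρ := by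
  have h : x ∘ π = x ∘ ρ :=
    Tuple.unique_monotone (StrictMono.monotone h1) (StrictMono.monotone h2)
  have hx : Function.Injective x := by
    have := (StrictMono.injective h1).comp π.symm.injective
    have e : permMap π x ∘ π.symm = x := by funext i; simp [permMap]
    rwa [e] at this
  ext i
  exact congrArg Fin.val (hx (congrFun h i))

/-! ### The density of the symmetrized law -/

/-- The density of the symmetrization of the measure with density `f`. -/
def symDens (f : (Fin d → ℝ) → ℝ≥0∞) (x : Fin d → ℝ) : ℝ≥0∞ :=
  ∑ π : Equiv.Perm (Fin d), (d.factorial : ℝ≥0∞)⁻¹ * f (permMap π x)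

lemma measurable_symDens {f : (Fin d → ℝ) → ℝ≥0∞} (hf : Measurable f) :
    Measurable (symDens f) :=
  Finset.measurable_sum _ fun π _ =>
    (hf.comp (measurePreserving_permMap π).measurable).const_mul _

lemma symmetrize_withDensity {f : (Fin d → ℝ) → ℝ≥0∞} (hf : Measurable f) :
    symmetrize (volume.withDensity f) = volume.withDensity (symDens f) := by
  have h : ∀ π : Equiv.Perm (Fin d),
      (volume.withDensity f).map (fun x => fun i => x (π i)) =
        volume.withDensity fun x => f (permMap π⁻¹ x) :=
    fun π => map_permMap_withDensity π hf
  have hm : ∀ π : Equiv.Perm (Fin d), Measurable fun x => f (permMap π x) :=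
    fun π => hf.comp (measurePreserving_permMap π).measurable
  ext s hs
  simp only [symmetrize, h, Measure.smul_apply, Measure.coe_finsetSum, Finset.sum_apply,
    withDensity_apply _ hs, smul_eq_mul, symDens]
  rw [lintegral_finsetSum]
  · rw [Finset.mul_sum, ← Equiv.sum_comp (Equiv.inv (Equiv.Perm (Fin d)))]
    refine Finset.sum_congr rfl fun π _ => ?_
    rw [lintegral_const_mul _ (hm π)]
    simp
  · exact fun π _ => (hm π).const_mul _

/-- For a density carried by the chamber, at most one term of `symDens` is nonzero at each
point, so any functional `φ` with `φ 0 = 0` passes through the sum; each of the `d!` terms then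
contributes the same integral. -/
lemma lintegral_symDens {f : (Fin d → ℝ) → ℝ≥0∞} (hf : Measurable f)
    (hsupp : ∀ x, x ∉ chamber d → f x = 0) {φ : ℝ≥0∞ → ℝ≥0∞} (hφ : Measurable φ)
    (h0 : φ 0 = 0) :
    ∫⁻ x, φ (symDens f x) = ∫⁻ x, d.factorial * φ ((d.factorial : ℝ≥0∞)⁻¹ * f x) := by
  have hmeas : Measurable fun x => φ ((d.factorial : ℝ≥0∞)⁻¹ * f x) := hφ.comp (hf.const_mul _)
  have key : ∀ x, φ (symDens f x) =
      ∑ π : Equiv.Perm (Fin d), φ ((d.factorial : ℝ≥0∞)⁻¹ * f (permMap π x)) := by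
    intro x
    by_cases hx : ∃ π : Equiv.Perm (Fin d), permMap π x ∈ chamber d
    · obtain ⟨π, hπ⟩ := hx
      have hz : ∀ ρ : Equiv.Perm (Fin d), ρ ≠ π → f (permMap ρ x) = 0 := fun ρ hρ =>
        hsupp _ fun h => hρ (perm_unique h hπ)
      rw [symDens, Finset.sum_eq_single π (fun ρ _ hρ => by simp [hz ρ hρ]) (by simp),
        Finset.sum_eq_single π (fun ρ _ hρ => by simp [hz ρ hρ, h0]) (by simp)]
    · push Not at hx
      simp [symDens, hsupp _ (hx _), h0]
  have hmeas' : ∀ π : Equiv.Perm (Fin d),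
      Measurable fun x => φ ((d.factorial : ℝ≥0∞)⁻¹ * f (permMap π x)) :=
    fun π => hmeas.comp (measurePreserving_permMap π).measurable
  simp_rw [key]
  rw [lintegral_finsetSum _ fun π _ => hmeas' π, lintegral_const_mul _ hmeas]
  simp_rw [fun π : Equiv.Perm (Fin d) => (measurePreserving_permMap π).lintegral_comp hmeas]
  simp [Fintype.card_perm]

/-! ### Entropy computations -/

/-- The entropy expressed through any measurable version `f` of the density. -/
lemma dEntropy_withDensity {f : (Fin d → ℝ) → ℝ≥0∞} (hf : Measurable f) :
    dEntropy (volume.withDensity f) =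
      ((∫⁻ x, ENNReal.ofReal (-((f x).toReal * Real.log (f x).toReal)) : ℝ≥0∞) : EReal)
        - ((∫⁻ x, ENNReal.ofReal ((f x).toReal * Real.log (f x).toReal) : ℝ≥0∞) : EReal) := by
  have h := Measure.rnDeriv_withDensity (volume : Measure (Fin d → ℝ)) hf
  rw [dEntropy, if_pos (withDensity_absolutelyContinuous _ _)]
  congr 2 <;>
  · refine lintegral_congr_ae ?_
    filter_upwards [h] with x hx
    rw [hx]

lemma symmetrize_ac_iff (ν : Measure (Fin d → ℝ)) : symmetrize ν ≪ volume ↔ ν ≪ volume := by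
  constructor
  · refine fun h => Measure.AbsolutelyContinuous.trans ?_ h
    intro s hs
    simp only [symmetrize, Measure.smul_apply, Measure.coe_finsetSum, Finset.sum_apply,
      smul_eq_mul, mul_eq_zero, ENNReal.inv_eq_zero, ENNReal.natCast_ne_top, false_or,
      Finset.sum_eq_zero_iff, Finset.mem_univ, true_implies] at hs
    simpa using hs 1
  · intro h s hs
    simp only [symmetrize, Measure.smul_apply, Measure.coe_finsetSum, Finset.sum_apply,
      smul_eq_mul, mul_eq_zero]
    right
    refine Finset.sum_eq_zero fun π _ => ?_
    have hp := measurePreserving_permMap π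
    have hac : ν.map (permMap π) ≪ volume := by
      have := h.map hp.measurable
      rwa [hp.map_eq] at this
    exact hac hs

/-- The arithmetic of `∞ - ∞` conventions: if `A' + B = B' + A + c` and moreover `A'`, `B'` are
within the finite distance `c` of `A`, `B`, then `A' - B' = c + (A - B)` holds in `EReal`,
including when one or both of the terms are infinite. -/
lemma ereal_sub_shift {A B A' B' : ℝ≥0∞} {c : ℝ} (hc : 0 ≤ c)
    (h : A' + B = B' + A + ENNReal.ofReal c) (hA : A ≤ A') (hA' : A' ≤ A + ENNReal.ofReal c)
    (hB' : B' ≤ B) (hB : B ≤ B' + ENNReal.ofReal c) :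
    (A' : EReal) - (B' : EReal) = (c : EReal) + ((A : EReal) - (B : EReal)) := by
  by_cases hBt : B = ⊤
  · have hBt' : B' = ⊤ := by
      by_contra hne
      exact absurd hBt ((lt_of_le_of_lt hB (by finiteness)).ne)
    subst hBt hBt'
    simp
  have hBt' : B' ≠ ⊤ := (lt_of_le_of_lt hB' (lt_top_iff_ne_top.2 hBt)).ne
  lift B to NNReal using hBt
  lift B' to NNReal using hBt'
  by_cases hAt : A = ⊤
  · have hAt' : A' = ⊤ := top_le_iff.1 (hAt ▸ hA)
    subst hAt hAt'
    have e : ∀ b : NNReal, ((b : ℝ≥0∞) : EReal) = ((b : ℝ) : EReal) := fun b => rfl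
    rw [e, e]
    simp
  have hAt' : A' ≠ ⊤ := (lt_of_le_of_lt hA' (by finiteness)).ne
  lift A to NNReal using hAt
  lift A' to NNReal using hAt'
  lift c to NNReal using hc
  rw [ENNReal.ofReal_coe_nnreal] at h
  have h' : (A' : ℝ) + B = B' + A + c := by exact_mod_cast h
  have e : ∀ b : NNReal, ((b : ℝ≥0∞) : EReal) = ((b : ℝ) : EReal) := fun b => rfl
  simp only [e]
  norm_cast
  linarith

/-- Multiplying back by `n`, the integrand for the density `t / n` is `t * log (t / n)`. -/
lemma scaled_integrand {n : ℕ} (hn : n ≠ 0) (t : ℝ≥0∞) (s : ℝ) :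
    (n : ℝ≥0∞) * ENNReal.ofReal (s * ((((n : ℝ≥0∞)⁻¹ * t).toReal) *
      Real.log (((n : ℝ≥0∞)⁻¹ * t).toReal))) =
    ENNReal.ofReal (s * (t.toReal * Real.log t.toReal - Real.log n * t.toReal)) := by
  have hn' : (n : ℝ) ≠ 0 := by exact_mod_cast hn
  rw [← ENNReal.ofReal_natCast n, ← ENNReal.ofReal_mul (by positivity)]
  congr 1
  rw [ENNReal.toReal_mul, ENNReal.toReal_inv, ENNReal.toReal_ofReal (by positivity)]
  by_cases ht : t.toReal = 0
  · simp [ht]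
  · rw [Real.log_mul (inv_ne_zero hn') ht, Real.log_inv]
    field_simp
    ring

/-- `H(symDens f) = log d! + H(f)` for a probability density `f` carried by the chamber. -/
lemma dEntropy_symDens {f : (Fin d → ℝ) → ℝ≥0∞} (hf : Measurable f)
    (hsupp : ∀ x, x ∉ chamber d → f x = 0) (hprob : ∫⁻ x, f x = 1) :
    dEntropy (volume.withDensity (symDens f)) =
      ((Real.log (d.factorial : ℝ)) : EReal) + dEntropy (volume.withDensity f) := by
  have hd := d.factorial_ne_zero
  set c := Real.log (d.factorial : ℝ) with hcdef
  have hc : 0 ≤ c := Real.log_natCast_nonneg _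
  have hfin : ∀ᵐ x, f x < ⊤ := ae_lt_top hf (by rw [hprob]; simp)
  rw [dEntropy_withDensity (measurable_symDens hf), dEntropy_withDensity hf]
  have eA : ∫⁻ x, ENNReal.ofReal (-((symDens f x).toReal * Real.log (symDens f x).toReal)) =
      ∫⁻ x, ENNReal.ofReal (-((f x).toReal * Real.log (f x).toReal - c * (f x).toReal)) := by
    rw [lintegral_symDens hf hsupp
      (φ := fun t => ENNReal.ofReal (-(t.toReal * Real.log t.toReal))) (by fun_prop) (by simp)]
    refine lintegral_congr fun x => ?_
    simpa using scaled_integrand hd (f x) (-1)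
  have eB : ∫⁻ x, ENNReal.ofReal ((symDens f x).toReal * Real.log (symDens f x).toReal) =
      ∫⁻ x, ENNReal.ofReal ((f x).toReal * Real.log (f x).toReal - c * (f x).toReal) := by
    rw [lintegral_symDens hf hsupp
      (φ := fun t => ENNReal.ofReal (t.toReal * Real.log t.toReal)) (by fun_prop) (by simp)]
    refine lintegral_congr fun x => ?_
    simpa using scaled_integrand hd (f x) 1
  have hcint : ∫⁻ x, ENNReal.ofReal (c * (f x).toReal) = ENNReal.ofReal c := by
    have : ∀ᵐ x, ENNReal.ofReal (c * (f x).toReal) = ENNReal.ofReal c * f x := by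
      filter_upwards [hfin] with x hx
      rw [ENNReal.ofReal_mul hc, ENNReal.ofReal_toReal hx.ne]
    rw [lintegral_congr_ae this, lintegral_const_mul _ hf, hprob, mul_one]
  have hcf : ∀ x, 0 ≤ c * (f x).toReal := fun x => mul_nonneg hc ENNReal.toReal_nonneg
  have hmeas : Measurable fun x => ENNReal.ofReal (c * (f x).toReal) := by fun_prop
  rw [eA, eB]
  refine ereal_sub_shift hc ?_ ?_ ?_ ?_ ?_
  · rw [← hcint, ← lintegral_add_left (by fun_prop), ← lintegral_add_left (by fun_prop),
      ← lintegral_add_left (by fun_prop)]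
    refine lintegral_congr fun x => ?_
    have := hcf x
    generalize (f x).toReal * Real.log (f x).toReal = u at *
    generalize c * (f x).toReal = v at *
    -- with `w⁺ = max w 0`, this is `(v - u)⁺ + u⁺ = (u - v)⁺ + (-u)⁺ + v`
    simp only [ENNReal.ofReal]
    norm_cast
    rw [← NNReal.coe_inj]
    push_cast [Real.coe_toNNReal']
    grind
  · exact lintegral_mono fun x => ENNReal.ofReal_le_ofReal (by linarith [hcf x])
  · rw [← hcint, ← lintegral_add_right _ hmeas]
    refine lintegral_mono fun x => le_trans (ENNReal.ofReal_le_ofReal ?_) ENNReal.ofReal_add_le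
    linarith
  · exact lintegral_mono fun x => ENNReal.ofReal_le_ofReal (by linarith [hcf x])
  · rw [← hcint, ← lintegral_add_right _ hmeas]
    refine lintegral_mono fun x => le_trans (ENNReal.ofReal_le_ofReal ?_) ENNReal.ofReal_add_le
    linarith


/-- Lemma `lem:HX_HXPI`.  Let `X` be a random vector on `ℝ^d` (with
distribution `μ`), `X^OS` its order statistics, and `Π` a uniform random permutation of
`{1, …, d}` independent of `X`.  Then `H((X^OS)_Π) = log(d!) + H(X^OS)`. -/
theorem stmt_16 {d : ℕ} (μ : Measure (Fin d → ℝ)) (hμ : IsProbabilityMeasure μ) :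
    dEntropy (symmetrize (μ.map orderStat)) =
      ((Real.log (d.factorial : ℝ)) : EReal) + dEntropy (μ.map orderStat) := by
  set ν := μ.map orderStat with hν
  have : IsProbabilityMeasure ν :=
    Measure.isProbabilityMeasure_map measurable_orderStat.aemeasurable
  by_cases hac : ν ≪ volume
  · set f : (Fin d → ℝ) → ℝ≥0∞ := (chamber d).indicator (ν.rnDeriv volume) with hfdef
    have hf : Measurable f := (Measure.measurable_rnDeriv _ _).indicator measurableSet_chamber
    have hνf : ν = volume.withDensity f := by
      rw [hfdef, withDensity_indicator measurableSet_chamber,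
        ← restrict_withDensity measurableSet_chamber, Measure.withDensity_rnDeriv_eq _ _ hac]
      exact (Measure.restrict_eq_self_of_ae_mem (ae_chamber hac)).symm
    have hprob : ∫⁻ x, f x = 1 := by
      have := measure_univ (μ := ν)
      rwa [hνf, withDensity_apply _ MeasurableSet.univ, Measure.restrict_univ] at this
    rw [hνf, symmetrize_withDensity hf]
    exact dEntropy_symDens hf (fun x hx => indicator_of_notMem hx _) hprob
  · have hac' : ¬ symmetrize ν ≪ volume := fun h => hac ((symmetrize_ac_iff ν).1 h)
    rw [dEntropy, dEntropy, if_neg hac, if_neg hac', EReal.add_bot]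

end MaxEntOS
end
end
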